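/- In the group presented by generators e, f, g with relators e·f·g and e⁻¹·f⁻¹·g⁻¹, for every integer n the relation eⁿ·fⁿ·gⁿ = 1 holds. -/

import Mathlib

/-- The two relators `e·f·g` and `e⁻¹·f⁻¹·g⁻¹` on generators `e = 0`, `f = 1`, `g = 2`. -/
def triRels : Set (FreeGroup (Fin 3)) :=
  { FreeGroup.of 0 * FreeGroup.of 1 * FreeGroup.of 2,
    (FreeGroup.of 0)⁻¹ * (FreeGroup.of 1)⁻¹ * (FreeGroup.of 2)⁻¹ }

/-- In the group `⟨e, f, g ∣ efg, e⁻¹f⁻¹g⁻¹⟩`, the relation `eⁿfⁿgⁿ = 1` holds for every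
integer `n`. -/
theorem zpow_mul_zpow_mul_zpow_eq_one (n : ℤ) :
    (PresentedGroup.of (rels := triRels) 0) ^ n *
      (PresentedGroup.of (rels := triRels) 1) ^ n *
      (PresentedGroup.of (rels := triRels) 2) ^ n = 1 := by
  have h1 : PresentedGroup.of (rels := triRels) 0 * PresentedGroup.of (rels := triRels) 1 *
      PresentedGroup.of (rels := triRels) 2 = 1 :=
    PresentedGroup.one_of_mem (rels := triRels)
      (x := FreeGroup.of 0 * FreeGroup.of 1 * FreeGroup.of 2) (Or.inl rfl)
  have h2 : (PresentedGroup.of (rels := triRels) 0)⁻¹ *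
      (PresentedGroup.of (rels := triRels) 1)⁻¹ *
      (PresentedGroup.of (rels := triRels) 2)⁻¹ = 1 :=
    PresentedGroup.one_of_mem (rels := triRels)
      (x := (FreeGroup.of 0)⁻¹ * (FreeGroup.of 1)⁻¹ * (FreeGroup.of 2)⁻¹) (Or.inr rfl)
  generalize PresentedGroup.of (rels := triRels) 0 = e at *
  generalize PresentedGroup.of (rels := triRels) 1 = f at *
  generalize PresentedGroup.of (rels := triRels) 2 = g at *
  have hg : g = (e * f)⁻¹ := eq_inv_of_mul_eq_one_right h1
  have hg' : e⁻¹ * f⁻¹ = g := mul_inv_eq_one.mp h2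
  have hc : Commute e f := by
    have h3 : e⁻¹ * f⁻¹ = (e * f)⁻¹ := hg'.trans hg
    have h4 := congrArg (·⁻¹) h3
    simp only [mul_inv_rev, inv_inv] at h4
    exact h4.symm
  rw [hg, inv_zpow, hc.mul_zpow, mul_inv_cancel]
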